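/- Let R ⊆ S be an integral inclusion of normal local domains with fraction fields K ⊆ L, with L/K finite separable. Let M be a Galois closure of L/K and T the integral closure of S in M. Suppose T is local, and that there is a unit u ∈ T such that the map T → S, x ↦ Tr_{M/L}(u·x), is a splitting of the inclusion S ⊆ T (an S-linear map restricting to the identity on S). Let J ⊆ S be an ideal such that J = J' ∩ S for some characteristic ideal J' of T. Then Tr_{L/K}(J) ⊆ J ∩ R. -/

import Mathlib

/-!
Since `Tr_{M/L}(u) = 1`, transitivity of the trace gives `Tr_{L/K}(j) = Tr_{M/K}(u * j)`, which is
the sum of the conjugates `σ (u * j)` over `σ ∈ Gal(M/K)`. As `S` is integral over `R`, the ring `T`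
is also the integral closure of `R` in `M`, so every `σ` restricts to an automorphism of `T`; hence
each conjugate of `u * j ∈ J'` lies in `J'`, and so does their sum.
-/

theorem isIntegralClosure_tower_bot {R S T M : Type*} [CommRing R] [CommRing S] [CommSemiring T]
    [CommRing M] [Algebra R S] [Algebra R M] [Algebra S M] [Algebra T M] [IsScalarTower R S M]
    [Algebra.IsIntegral R S] [IsIntegralClosure T S M] : IsIntegralClosure T R M where
  algebraMap_injective := IsIntegralClosure.algebraMap_injective T S M
  isIntegral_iff {x} :=
    ⟨fun hx ↦ (IsIntegralClosure.isIntegral_iff (R := S)).mp hx.tower_top,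
      fun hx ↦ isIntegral_trans (A := S) x (IsIntegralClosure.isIntegral_iff.mpr hx)⟩

theorem trace_mul_algebraMap_of_trace_eq_one {K L M : Type*} [CommRing K] [CommRing L] [CommRing M]
    [Algebra K L] [Algebra L M] [Algebra K M] [IsScalarTower K L M]
    [Module.Free K L] [Module.Finite K L] [Module.Free L M] [Module.Finite L M]
    {u : M} (hu : Algebra.trace L M u = 1) (l : L) :
    Algebra.trace K M (u * algebraMap L M l) = Algebra.trace K L l :=
  calc Algebra.trace K M (u * algebraMap L M l)
      = Algebra.trace K L (Algebra.trace L M (l • u)) := by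
        rw [Algebra.trace_trace, Algebra.smul_def, mul_comm]
    _ = Algebra.trace K L l := by rw [map_smul, hu, smul_eq_mul, mul_one]

section AKLB

variable {A K L B : Type*} [CommRing A] [IsIntegrallyClosed A] [Field K] [Field L] [CommRing B]
  [Algebra A K] [IsFractionRing A K] [Algebra K L] [Algebra A L] [IsScalarTower A K L]
  [Algebra A B] [Algebra B L] [IsScalarTower A B L] [IsIntegralClosure B A L]
  [FiniteDimensional K L] [IsGalois K L]

-- `Algebra.intTrace` would require `B` to be a finite `A`-module, which can fail for non-Noetherian
-- `A`; `Algebra.intTraceAux` does not.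
theorem sum_galRestrict_eq_intTraceAux (x : B) :
    ∑ σ : Gal(L/K), galRestrict A K L B σ x = algebraMap A B (Algebra.intTraceAux A K L B x) := by
  apply IsIntegralClosure.algebraMap_injective B A L
  simp only [map_sum, algebraMap_galRestrict_apply]
  rw [← IsScalarTower.algebraMap_apply, IsScalarTower.algebraMap_apply A K L,
    Algebra.map_intTraceAux, trace_eq_sum_automorphisms]

theorem algebraMap_intTraceAux_mem_of_forall_algEquiv_mem {I : Ideal B}
    (hI : ∀ φ : B ≃ₐ[A] B, ∀ x ∈ I, φ x ∈ I) {x : B} (hx : x ∈ I) :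
    algebraMap A B (Algebra.intTraceAux A K L B x) ∈ I := by
  rw [← sum_galRestrict_eq_intTraceAux]
  exact I.sum_mem fun σ _ ↦ hI (galRestrict A K L B σ) x hx

end AKLB

theorem trace_mem_of_contraction_of_characteristic_general
    {R S K L M : Type*} [CommRing R] [CommRing S] [Field K] [Field L] [Field M]
    [IsIntegrallyClosed R] [Algebra R K] [IsFractionRing R K] [Algebra S L]
    [Algebra R S] [Algebra K L] [Algebra R L] [IsScalarTower R K L] [IsScalarTower R S L]
    [Algebra.IsIntegral R S]
    [Algebra L M] [Algebra K M] [IsScalarTower K L M] [Algebra S M] [IsScalarTower S L M]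
    [FiniteDimensional K M] [IsGalois K M]
    (u : integralClosure S M) (hu : Algebra.trace L M (u : M) = 1)
    (J' : Ideal (integralClosure S M))
    (hJ'char : ∀ φ : (integralClosure S M) ≃+* (integralClosure S M), ∀ x ∈ J', φ x ∈ J') :
    ∀ j ∈ J'.comap (algebraMap S (integralClosure S M)), ∃ r : R,
      algebraMap R K r = Algebra.trace K L (algebraMap S L j) ∧
        algebraMap R S r ∈ J'.comap (algebraMap S (integralClosure S M)) := by
  intro j hj
  let T := integralClosure S M
  have : FiniteDimensional K L := .left K L M
  have : FiniteDimensional L M := .right K L M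
  let : Algebra R M := .compHom M (algebraMap R S)
  have : IsScalarTower R S M := .of_algebraMap_eq' rfl
  have : IsScalarTower R L M := .to₁₃₄ R S L M
  have : IsScalarTower R K M := .to₁₂₄ R K L M
  have : IsIntegralClosure T R M := isIntegralClosure_tower_bot (S := S)
  have huj : u * algebraMap S T j ∈ J' := J'.mul_mem_left u hj
  refine ⟨Algebra.intTraceAux R K M T (u * algebraMap S T j), ?_, ?_⟩
  · rw [Algebra.map_intTraceAux, map_mul, ← IsScalarTower.algebraMap_apply S T M,
      IsScalarTower.algebraMap_apply S L M]
    exact trace_mul_algebraMap_of_trace_eq_one hu (algebraMap S L j)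
  · rw [Ideal.mem_comap, ← IsScalarTower.algebraMap_apply R S T]
    exact algebraMap_intTraceAux_mem_of_forall_algEquiv_mem
      (fun φ ↦ hJ'char φ.toRingEquiv) huj

/-- Let `R ⊆ S` be an integral inclusion of normal local domains with fraction fields `K ⊆ L`,
`L/K` finite separable, `M` a Galois closure of `L/K` and `T` the integral closure of `S` in
`M`. Suppose `T` is local and there is a unit `u ∈ T` such that `x ↦ Tr_{M/L}(u·x)` is a
splitting of `S ⊆ T`. If `J ⊆ S` is an ideal with `J = J' ∩ S` for a characteristic ideal `J'`
of `T`, then `Tr_{L/K}(J) ⊆ J ∩ R`. -/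
theorem trace_mem_of_contraction_of_characteristic
    {R S K L M : Type*} [CommRing R] [CommRing S] [Field K] [Field L] [Field M]
    [IsDomain R] [IsDomain S] [IsLocalRing R] [IsLocalRing S]
    [IsIntegrallyClosed R] [IsIntegrallyClosed S]
    [Algebra R K] [IsFractionRing R K] [Algebra S L] [IsFractionRing S L]
    [Algebra R S] [Algebra K L] [Algebra R L] [IsScalarTower R K L] [IsScalarTower R S L]
    [FiniteDimensional K L] [Algebra.IsSeparable K L]
    [Algebra.IsIntegral R S] (hinj : Function.Injective (algebraMap R S))
    -- `M` is a Galois closure of `L/K`: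
    [Algebra L M] [Algebra K M] [IsScalarTower K L M] [Algebra S M] [IsScalarTower S L M]
    [FiniteDimensional K M] [FiniteDimensional L M] [IsGalois K M]
    (hmin : ∀ M' : IntermediateField K M, IsGalois K M' →
      (∀ l : L, algebraMap L M l ∈ M') → M' = ⊤)
    -- `T` is the integral closure of `S` in `M`; it is local:
    (hTloc : IsLocalRing (integralClosure S M))
    -- a unit `u ∈ T` such that `Tr_{M/L}(u·-)` is a splitting of `S ⊆ T`:
    (u : integralClosure S M) (hu : IsUnit u)
    (hTr : ∀ t : integralClosure S M, ∃ s : S,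
      algebraMap S L s = Algebra.trace L M ((u : M) * (t : M)))
    (hTrId : ∀ s : S,
      Algebra.trace L M ((u : M) * algebraMap S M s) = algebraMap S L s)
    -- the ideals:
    (J : Ideal S) (J' : Ideal (integralClosure S M))
    (hJ'char : ∀ φ : (integralClosure S M) ≃+* (integralClosure S M), ∀ x ∈ J', φ x ∈ J')
    (hJ : J = J'.comap (algebraMap S (integralClosure S M))) :
    ∀ j ∈ J, ∃ r : R,
      algebraMap R K r = Algebra.trace K L (algebraMap S L j) ∧ algebraMap R S r ∈ J := by
  subst hJ
  exact trace_mem_of_contraction_of_characteristic_general u (by simpa using hTrId 1) J' hJ'char
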